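/- Let m ∈ ℕ and let w be a (1/(m+1))-concise group-word in n variables; set v = [w(x_1,...,x_n), x_{n+1}, ..., x_{n+m}]. There exists a function f : ℕ → ℕ → ℕ (depending only on w and m) such that: if G is a BFC(w)-group with |x^{G_w}| ≤ r for all x ∈ G, and B is a finite subset of G_v^*, then for every x ∈ G there exists a positive integer e ≤ f(r)(|B|) such that b^e lies in the center of the subgroup generated by x together with B, for every b ∈ B. -/

import Mathlib

/-- The set of `w`-values in `G`: images of the word `w` (an element of the free
group on `n` generators) under all homomorphisms `FreeGroup (Fin n) →* G`. -/
def wValues {n : ℕ} (w : FreeGroup (Fin n)) (G : Type*) [Group G] : Set G :=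
  Set.range fun g : Fin n → G => FreeGroup.lift g w

/-- `G_w^* = G_w ∪ G_w⁻¹`. -/
def wValuesStar {n : ℕ} (w : FreeGroup (Fin n)) (G : Type*) [Group G] : Set G :=
  wValues w G ∪ (wValues w G)⁻¹

/-- The verbal subgroup `w(G)` generated by all `w`-values. -/
def verbalSubgroup {n : ℕ} (w : FreeGroup (Fin n)) (G : Type*) [Group G] : Subgroup G :=
  Subgroup.closure (wValues w G)

/-- The iterated commutator subgroup `[H, G, ..., G]` with `G` repeated `k` times. -/
def iterCommSub (G : Type*) [Group G] (H : Subgroup G) : ℕ → Subgroup G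
  | 0 => H
  | k + 1 => ⁅iterCommSub G H k, (⊤ : Subgroup G)⁆

/-- The set of conjugates `x^S = {g⁻¹ x g : g ∈ S}`. -/
def conjSet {G : Type*} [Group G] (x : G) (S : Set G) : Set G :=
  (fun g => g⁻¹ * x * g) '' S

/-- `G` is an `FC(w)`-group: every conjugacy set `x^{G_w}` is finite. -/
def IsFCw {n : ℕ} (w : FreeGroup (Fin n)) (G : Type*) [Group G] : Prop :=
  ∀ x : G, (conjSet x (wValues w G)).Finite

/-- `G` is a `BFC(w)`-group: the sets `x^{G_w}` are finite of bounded size. -/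
def IsBFCw {n : ℕ} (w : FreeGroup (Fin n)) (G : Type*) [Group G] : Prop :=
  ∃ c : ℕ, ∀ x : G,
    (conjSet x (wValues w G)).Finite ∧ (conjSet x (wValues w G)).ncard ≤ c

/-- A subgroup `H` is `FC`-embedded in `G` if `x^H` is finite for every `x ∈ G`. -/
def IsFCEmbedded {G : Type*} [Group G] (H : Subgroup G) : Prop :=
  ∀ x : G, (conjSet x (H : Set G)).Finite

/-- A subgroup `H` is `BFC`-embedded in `G` if the sets `x^H` are finite of bounded size. -/
def IsBFCEmbedded {G : Type*} [Group G] (H : Subgroup G) : Prop :=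
  ∃ d : ℕ, ∀ x : G,
    (conjSet x (H : Set G)).Finite ∧ (conjSet x (H : Set G)).ncard ≤ d

/-- A word `w` is `(1/k)`-concise (`k ≥ 1`): in every group `G` with `G_w` finite,
the subgroup `[w(G), G, ..., G]` (with `G` repeated `k - 1` times) is finite. -/
def IsFracConcise {n : ℕ} (w : FreeGroup (Fin n)) (k : ℕ) : Prop :=
  ∀ (G : Type*) [Group G], (wValues w G).Finite →
    ((iterCommSub G (verbalSubgroup w G) (k - 1) : Subgroup G) : Set G).Finite

/-- A word `w` is `0`-concise: in every group `G` with `G_w` finite, some iterated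
commutator subgroup `[w(G), G, ..., G]` is finite. -/
def IsZeroConcise {n : ℕ} (w : FreeGroup (Fin n)) : Prop :=
  ∀ (G : Type*) [Group G], (wValues w G).Finite →
    ∃ k : ℕ, ((iterCommSub G (verbalSubgroup w G) k : Subgroup G) : Set G).Finite

/-- The commutator `[a, b] = a⁻¹ b⁻¹ a b`. -/
def pcomm {G : Type*} [Group G] (a b : G) : G := a⁻¹ * b⁻¹ * a * b

/-- The word `w(x_1, ..., x_n)` viewed in the free group on `n + m` generators. -/
def extendWord {n : ℕ} (m : ℕ) (w : FreeGroup (Fin n)) : FreeGroup (Fin (n + m)) :=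
  FreeGroup.map (Fin.castAdd m) w

/-- The word `v = [w(x_1, ..., x_n), x_{n+1}, ..., x_{n+m}]`. -/
def commWord {n : ℕ} (m : ℕ) (w : FreeGroup (Fin n)) : FreeGroup (Fin (n + m)) :=
  (List.ofFn fun i : Fin m => FreeGroup.of (Fin.natAdd n i)).foldl pcomm (extendWord m w)

/-- The iterated commutator `[y, b, ..., b]` with `b` repeated `k` times. -/
def iterPcomm {G : Type*} [Group G] (y b : G) : ℕ → G
  | 0 => y
  | k + 1 => pcomm (iterPcomm y b k) b

/-!
If `G_w` is finite then, by fractional conciseness, `v`-values lie in the finite subgroup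
`[w(G), G, ..., G]` and so have finite order. A compactness argument makes this uniform: were there
groups `Q_k` with at most `N` `w`-values and `v`-values `b_k` with `b_k ^ k! ≠ 1`, then the limit of
the kernels of the corresponding maps from the free group along an ultrafilter would define a group
with at most `N` `w`-values and a `v`-value of infinite order.

For a `BFC(w)`-group `G`, let `K` be generated by `x` and the entries `a_{b,i}` of the `v`-values in
`B`. Conjugation on `K` is determined by its effect on the generators, so `K / Z(K)` has at most
`r ^ (|B| (n + m) + 1)` `w`-values, and the uniform bound applies to it.
-/

open Filter Function

section WordValues

variable {n : ℕ} {w : FreeGroup (Fin n)} {G H : Type*} [Group G] [Group H]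

theorem map_freeGroup_lift {α : Type*} (φ : G →* H) (a : α → G) (u : FreeGroup α) :
    φ (FreeGroup.lift a u) = FreeGroup.lift (fun i => φ (a i)) u :=
  FreeGroup.lift_unique (φ.comp (FreeGroup.lift a)) (by simp)

theorem map_mem_wValues (φ : G →* H) {g : G} (hg : g ∈ wValues w G) : φ g ∈ wValues w H := by
  obtain ⟨a, rfl⟩ := hg
  exact ⟨fun i => φ (a i), (map_freeGroup_lift φ a w).symm⟩

theorem image_wValues_subset (φ : G →* H) : φ '' wValues w G ⊆ wValues w H :=
  Set.image_subset_iff.2 fun _ hg => map_mem_wValues φ hg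

theorem image_wValues_of_surjective {φ : G →* H} (hφ : Surjective φ) :
    φ '' wValues w G = wValues w H := by
  refine (image_wValues_subset φ).antisymm ?_
  rintro _ ⟨a, rfl⟩
  choose a' ha' using fun i => hφ (a i)
  exact ⟨FreeGroup.lift a' w, ⟨a', rfl⟩, by simp only [map_freeGroup_lift, ha']⟩

theorem self_mem_wValues (w : FreeGroup (Fin n)) : w ∈ wValues w (FreeGroup (Fin n)) :=
  ⟨FreeGroup.of, FreeGroup.lift_of_apply w⟩

theorem exists_forall_mem_image_wValuesStar {g : G} (hg : g ∈ wValuesStar w G) :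
    ∃ a : Fin n → G, ∀ K : Subgroup G, (∀ i, a i ∈ K) → g ∈ K.subtype '' wValuesStar w K := by
  have lift_mem (a : Fin n → G) (K : Subgroup G) (ha : ∀ i, a i ∈ K) :
      FreeGroup.lift a w ∈ K.subtype '' wValues w K :=
    ⟨_, ⟨fun i => ⟨a i, ha i⟩, rfl⟩, map_freeGroup_lift K.subtype _ w⟩
  rcases hg with ⟨a, rfl⟩ | ⟨a, ha : FreeGroup.lift a w = g⁻¹⟩
  · exact ⟨a, fun K hK => Set.image_mono Set.subset_union_left (lift_mem a K hK)⟩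
  · refine ⟨a, fun K hK => ?_⟩
    obtain ⟨k, hk, hka⟩ := lift_mem a K hK
    exact ⟨k⁻¹, Or.inr (Set.inv_mem_inv.2 hk), by rw [map_inv, hka, ha, inv_inv]⟩

theorem pow_mem_of_mem_wValuesStar {N : Subgroup G} [N.Normal] {e : ℕ}
    (he : ∀ q ∈ wValues w (G ⧸ N), q ^ e = 1) {g : G} (hg : g ∈ wValuesStar w G) : g ^ e ∈ N := by
  have pow_mem_of_mem {y : G} (hy : y ∈ wValues w G) : y ^ e ∈ N := by
    rw [← QuotientGroup.eq_one_iff, QuotientGroup.mk_pow]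
    exact he _ (map_mem_wValues (QuotientGroup.mk' N) hy)
  rcases hg with hg | hg
  · exact pow_mem_of_mem hg
  · simpa only [inv_pow, inv_mem_iff] using pow_mem_of_mem hg

end WordValues

section IteratedCommutators

universe u

variable {n m : ℕ} {w : FreeGroup (Fin n)} {G : Type u} [Group G]

theorem map_pcomm {H : Type*} [Group H] (φ : G →* H) (a b : G) :
    φ (pcomm a b) = pcomm (φ a) (φ b) := by
  simp only [pcomm, map_mul, map_inv]

theorem lift_commWord (a : Fin (n + m) → G) :
    FreeGroup.lift a (commWord m w) =
      (List.ofFn fun i => a (Fin.natAdd n i)).foldl pcomm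
        (FreeGroup.lift (fun i => a (Fin.castAdd m i)) w) := by
  have lift_extendWord : FreeGroup.lift a (extendWord m w) =
      FreeGroup.lift (fun i => a (Fin.castAdd m i)) w :=
    FreeGroup.lift_unique ((FreeGroup.lift a).comp (FreeGroup.map (Fin.castAdd m))) (by simp)
  rw [← lift_extendWord, commWord,
    ← List.foldl_hom (FreeGroup.lift a) (g₂ := fun x y => pcomm x (FreeGroup.lift a y))
      fun x y => (map_pcomm _ x y).symm,
    ← List.foldl_map, List.map_ofFn]
  simp only [comp_def, FreeGroup.lift_apply_of]

theorem pcomm_mem_iterCommSub_succ {H : Subgroup G} {k : ℕ} {y : G} (hy : y ∈ iterCommSub G H k)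
    (g : G) : pcomm y g ∈ iterCommSub G H (k + 1) := by
  simpa only [pcomm, iterCommSub, commutatorElement_def, inv_inv] using
    Subgroup.commutator_mem_commutator (inv_mem hy) (Subgroup.mem_top g⁻¹)

theorem foldl_pcomm_mem_iterCommSub {H : Subgroup G} (l : List G) {k : ℕ} {y : G}
    (hy : y ∈ iterCommSub G H k) : l.foldl pcomm y ∈ iterCommSub G H (k + l.length) := by
  induction l generalizing k y with
  | nil => exact hy
  | cons g l ih =>
    rw [List.length_cons, add_comm l.length, ← add_assoc]
    exact ih (pcomm_mem_iterCommSub_succ hy g)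

theorem wValues_commWord_subset_iterCommSub :
    wValues (commWord m w) G ⊆ iterCommSub G (verbalSubgroup w G) m := by
  rintro _ ⟨a, rfl⟩
  have hw : FreeGroup.lift (fun i => a (Fin.castAdd m i)) w ∈
      iterCommSub G (verbalSubgroup w G) 0 := Subgroup.subset_closure ⟨_, rfl⟩
  simpa only [lift_commWord, List.length_ofFn, zero_add, SetLike.mem_coe] using
    foldl_pcomm_mem_iterCommSub (List.ofFn fun i => a (Fin.natAdd n i)) hw

theorem isOfFinOrder_of_mem_wValues_commWord (hw : IsFracConcise.{u} w (m + 1))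
    (hfin : (wValues w G).Finite) {b : G} (hb : b ∈ wValues (commWord m w) G) :
    IsOfFinOrder b := by
  have : Finite (iterCommSub G (verbalSubgroup w G) m) := hw G hfin
  exact Submonoid.isOfFinOrder_coe.2 <|
    isOfFinOrder_of_finite
      (⟨b, wValues_commWord_subset_iterCommSub hb⟩ : iterCommSub G (verbalSubgroup w G) m)

end IteratedCommutators

section Colorings

variable {α β C : Type*} {f : α → β}

theorem encard_range_le_of_factorsThrough {c : α → C} (h : f.FactorsThrough c) :
    (Set.range f).encard ≤ ENat.card C := by
  have hinj : Injective fun y : Set.range f => c y.2.choose := fun y z hyz =>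
    Subtype.ext <| y.2.choose_spec.symm.trans <| (h hyz).trans z.2.choose_spec
  exact ENat.card_le_card_of_injective hinj

theorem exists_factorsThrough_of_encard_range_le {N : ℕ} (h : (Set.range f).encard ≤ N) :
    ∃ c : α → Fin N, f.FactorsThrough c := by
  obtain ⟨hfin, hcard⟩ := Set.encard_le_coe_iff_finite_ncard_le.1 h
  have := hfin.fintype
  obtain ⟨ι⟩ : Nonempty (Set.range f ↪ Fin N) :=
    Embedding.nonempty_of_card_le <| by
      rwa [Fintype.card_fin, ← Nat.card_eq_fintype_card, Nat.card_coe_set_eq]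
  exact ⟨fun x => ι ⟨f x, x, rfl⟩, fun _ _ hxy => congrArg Subtype.val (ι.injective hxy)⟩

end Colorings

section EventualKernel

variable {ι G : Type*} [Group G] {Q : ι → Type*} [∀ i, Group (Q i)]

/-- The limit along a filter `l` of the kernels of homomorphisms `φ i : G →* Q i`. When `l` is an
ultrafilter, it is the kernel of the induced map from `G` to the ultraproduct of the `Q i`. -/
def eventualKer (l : Filter ι) (φ : ∀ i, G →* Q i) : Subgroup G where
  carrier := {g | ∀ᶠ i in l, φ i g = 1}
  one_mem' := .of_forall fun i => map_one (φ i)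
  mul_mem' ha hb := by
    filter_upwards [ha, hb] with i hai hbi
    rw [map_mul, hai, hbi, one_mul]
  inv_mem' ha := by
    filter_upwards [ha] with i hai
    rw [map_inv, hai, inv_one]

theorem mem_eventualKer {l : Filter ι} {φ : ∀ i, G →* Q i} {g : G} :
    g ∈ eventualKer l φ ↔ ∀ᶠ i in l, φ i g = 1 :=
  Iff.rfl

instance eventualKer_normal (l : Filter ι) (φ : ∀ i, G →* Q i) : (eventualKer l φ).Normal where
  conj_mem a ha g := by
    filter_upwards [ha] with i hai
    rw [map_mul, map_mul, hai, mul_one, map_inv, mul_inv_cancel]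

theorem encard_image_mk_eventualKer_le (l : Ultrafilter ι) (φ : ∀ i, G →* Q i) {S : Set G} {N : ℕ}
    (h : ∀ i, (φ i '' S).encard ≤ N) :
    (QuotientGroup.mk' (eventualKer (l : Filter ι) φ) '' S).encard ≤ N := by
  have hcolor (i : ι) : ∃ c : S → Fin N, (fun s : S => φ i s).FactorsThrough c :=
    exists_factorsThrough_of_encard_range_le (Set.image_eq_range _ S ▸ h i)
  choose c hc using hcolor
  have hlim (s : S) : ∃ j, ∀ᶠ i in (l : Filter ι), c i s = j :=
    Ultrafilter.eventually_exists_iff.1 <| .of_forall fun i => ⟨c i s, rfl⟩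
  choose cLim hcLim using hlim
  have hfactors : FactorsThrough
      (fun s : S => QuotientGroup.mk' (eventualKer (l : Filter ι) φ) s) cLim := by
    intro s t hst
    refine QuotientGroup.eq.2 (mem_eventualKer.2 ?_)
    filter_upwards [hcLim s, hcLim t] with i hs ht
    have hφ : φ i s = φ i t := hc i (by rw [hs, ht, hst])
    rw [map_mul, map_inv, hφ, inv_mul_cancel]
  simpa [Set.image_eq_range] using encard_range_le_of_factorsThrough hfactors

end EventualKernel

section UniformExponent

universe u

variable {n d : ℕ} (w : FreeGroup (Fin n)) (v : FreeGroup (Fin d))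

theorem isOfFinOrder_mk_of_finite_wValues
    (htors : ∀ (Q : Type u) [Group Q], (wValues w Q).Finite → ∀ b ∈ wValues v Q, IsOfFinOrder b)
    (L : Subgroup (FreeGroup (Fin d))) [L.Normal]
    (hfin : (QuotientGroup.mk' L '' wValues w (FreeGroup (Fin d))).Finite) :
    IsOfFinOrder (QuotientGroup.mk' L v) := by
  -- `htors` only covers groups in `Type u`, whereas the quotient lives in `Type`.
  let up : FreeGroup (Fin d) ⧸ L ≃* ULift.{u} (FreeGroup (Fin d) ⧸ L) := MulEquiv.ulift.symm
  rw [image_wValues_of_surjective (QuotientGroup.mk'_surjective L)] at hfin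
  have hup : (wValues w (ULift.{u} (FreeGroup (Fin d) ⧸ L))).Finite := by
    rw [← image_wValues_of_surjective (φ := up.toMonoidHom) up.surjective]
    exact hfin.image _
  have hv := map_mem_wValues up.toMonoidHom <|
    map_mem_wValues (QuotientGroup.mk' L) (self_mem_wValues v)
  exact up.injective.isOfFinOrder_iff.1 (htors _ hup _ hv)

theorem exists_pow_eq_one_of_encard_wValues_le
    (htors : ∀ (Q : Type u) [Group Q], (wValues w Q).Finite → ∀ b ∈ wValues v Q, IsOfFinOrder b)
    (N : ℕ) :
    ∃ E : ℕ, 0 < E ∧ ∀ (Q : Type*) [Group Q], (wValues w Q).encard ≤ N →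
      ∀ b ∈ wValues v Q, b ^ E = 1 := by
  by_contra! hcon
  choose Q _ hQ b hb hbE using fun k : ℕ => hcon k.factorial k.factorial_pos
  choose a ha using hb
  let φ (k : ℕ) : FreeGroup (Fin d) →* Q k := FreeGroup.lift (a k)
  have hφ (k : ℕ) : (φ k '' wValues w (FreeGroup (Fin d))).encard ≤ N :=
    (Set.encard_le_encard (image_wValues_subset (φ k))).trans (hQ k)
  have hlim := encard_image_mk_eventualKer_le (hyperfilter ℕ) φ hφ
  obtain ⟨j, hj, hvj⟩ := isOfFinOrder_iff_pow_eq_one.1 <|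
    isOfFinOrder_mk_of_finite_wValues w v htors _ (Set.finite_of_encard_le_coe hlim)
  rw [← map_pow] at hvj
  have hpow : ∀ᶠ k in (hyperfilter ℕ : Filter ℕ), φ k (v ^ j) = 1 :=
    mem_eventualKer.1 ((QuotientGroup.eq_one_iff _).1 hvj)
  have hle : ∀ᶠ k in (hyperfilter ℕ : Filter ℕ), j ≤ k :=
    (eventually_ge_atTop j).filter_mono Nat.hyperfilter_le_atTop
  obtain ⟨k, hk, hjk⟩ := (hpow.and hle).exists
  have hbj : b k ^ j = 1 := by rw [← ha k, ← hk, map_pow]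
  exact hbE k (orderOf_dvd_iff_pow_eq_one.1 <|
    (orderOf_dvd_of_pow_eq_one hbj).trans (Nat.dvd_factorial hj hjk))

end UniformExponent

section CentralQuotient

variable {ι G : Type*} [Group G]

theorem mk_center_eq_of_conj_eq {gen : ι → G} (hgen : Subgroup.closure (Set.range gen) = ⊤)
    {s t : G} (h : ∀ i, s⁻¹ * gen i * s = t⁻¹ * gen i * t) :
    (s : G ⧸ Subgroup.center G) = t := by
  have hconj : (MulAut.conj s⁻¹).toMonoidHom = (MulAut.conj t⁻¹).toMonoidHom := by
    refine MonoidHom.eq_of_eqOn_dense hgen ?_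
    rintro _ ⟨i, rfl⟩
    simpa using h i
  refine QuotientGroup.eq.2 (Subgroup.mem_center_iff.2 fun g => ?_)
  have hg : s⁻¹ * (t * g * t⁻¹) * s = g := by
    simpa [mul_assoc] using DFunLike.congr_fun hconj (t * g * t⁻¹)
  calc g * (s⁻¹ * t) = s⁻¹ * (t * g * t⁻¹) * s * (s⁻¹ * t) := by rw [hg]
    _ = s⁻¹ * t * g := by group

theorem encard_image_mk_center_le [Fintype ι] {gen : ι → G}
    (hgen : Subgroup.closure (Set.range gen) = ⊤) {S : Set G} {r : ℕ}
    (h : ∀ i, (conjSet (gen i) S).encard ≤ r) :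
    (QuotientGroup.mk' (Subgroup.center G) '' S).encard ≤ (r ^ Fintype.card ι : ℕ) := by
  classical
  have hcolor (i : ι) : ∃ c : S → Fin r,
      (fun s : S => (s : G)⁻¹ * gen i * s).FactorsThrough c :=
    exists_factorsThrough_of_encard_range_le <| by
      simpa only [conjSet, Set.image_eq_range] using h i
  choose c hc using hcolor
  have hfactors : FactorsThrough (fun s : S => QuotientGroup.mk' (Subgroup.center G) s)
      fun s i => c i s :=
    fun _ _ hst => mk_center_eq_of_conj_eq hgen fun i => hc i (congrFun hst i)
  simpa [Set.image_eq_range] using encard_range_le_of_factorsThrough hfactors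

theorem encard_conjSet_wValues_le_of_injective {n : ℕ} {w : FreeGroup (Fin n)} {H : Type*}
    [Group H] {φ : H →* G} (hφ : Injective φ) (x : H) :
    (conjSet x (wValues w H)).encard ≤ (conjSet (φ x) (wValues w G)).encard := by
  rw [← hφ.encard_image]
  refine Set.encard_le_encard ?_
  rintro _ ⟨_, ⟨g, hg, rfl⟩, rfl⟩
  exact ⟨φ g, map_mem_wValues φ hg, by simp only [map_mul, map_inv]⟩

theorem encard_wValues_closure_quotient_center_le {n : ℕ} {w : FreeGroup (Fin n)} [Fintype ι]
    (gen : ι → G) {r : ℕ} (h : ∀ i, (conjSet (gen i) (wValues w G)).encard ≤ r) :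
    (wValues w (Subgroup.closure (Set.range gen) ⧸
      Subgroup.center (Subgroup.closure (Set.range gen)))).encard ≤ (r ^ Fintype.card ι : ℕ) := by
  let gen' (i : ι) : Subgroup.closure (Set.range gen) :=
    ⟨gen i, Subgroup.subset_closure (Set.mem_range_self i)⟩
  have hgen' : Subgroup.closure (Set.range gen') = ⊤ := by
    rw [← Subgroup.closure_closure_coe_preimage (k := Set.range gen)]
    congr 1
    ext y
    simp [gen', Subtype.ext_iff]
  rw [← image_wValues_of_surjective (QuotientGroup.mk'_surjective _)]
  exact encard_image_mk_center_le hgen' fun i =>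
    (encard_conjSet_wValues_le_of_injective (Subgroup.subtype_injective _) (gen' i)).trans (h i)

end CentralQuotient

theorem statement_6_general {n d : ℕ} (w : FreeGroup (Fin n)) (v : FreeGroup (Fin d))
    (htors : ∀ (Q : Type*) [Group Q], (wValues w Q).Finite → ∀ b ∈ wValues v Q, IsOfFinOrder b) :
    ∃ f : ℕ → ℕ → ℕ, ∀ (r : ℕ) (G : Type*) [Group G],
      (∀ x : G, (conjSet x (wValues w G)).Finite ∧ (conjSet x (wValues w G)).ncard ≤ r) →
      ∀ B : Set G, B.Finite → B ⊆ wValuesStar v G →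
      ∀ x : G, ∃ e : ℕ, 0 < e ∧ e ≤ f r B.ncard ∧ ∀ b ∈ B,
        b ^ e ∈ Subgroup.closure (insert x B) ⊓
          Subgroup.centralizer ((Subgroup.closure (insert x B) : Subgroup G) : Set G) := by
  choose E hEpos hE using exists_pow_eq_one_of_encard_wValues_le w v htors
  refine ⟨fun r s => E (r ^ (s * d + 1)), fun r G _ hG B hB hBv x => ⟨_, hEpos _, le_rfl, ?_⟩⟩
  have := hB.fintype
  choose a ha using fun b : B => exists_forall_mem_image_wValuesStar (hBv b.2)
  let gen (t : Option (B × Fin d)) : G := t.elim x fun p => a p.1 p.2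
  let K := Subgroup.closure (Set.range gen)
  have hgen (t) : gen t ∈ K := Subgroup.subset_closure ⟨t, rfl⟩
  have hBK (b : B) : (b : G) ∈ K.subtype '' wValuesStar v K := ha b K fun i => hgen (some (b, i))
  have hcard : (wValues w (K ⧸ Subgroup.center K)).encard ≤ (r ^ (B.ncard * d + 1) : ℕ) := by
    simpa using encard_wValues_closure_quotient_center_le gen fun t =>
      Set.encard_le_coe_iff_finite_ncard_le.2 (hG (gen t))
  have hle : Subgroup.closure (insert x B) ≤ K := by
    refine (Subgroup.closure_le _).2 (Set.insert_subset (hgen none) fun b hb => ?_)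
    obtain ⟨k, -, rfl⟩ := hBK ⟨b, hb⟩
    exact k.2
  intro b hb
  refine ⟨pow_mem (Subgroup.subset_closure (Set.mem_insert_of_mem x hb)) _, fun y hy => ?_⟩
  obtain ⟨k, hk, rfl⟩ := hBK ⟨b, hb⟩
  have hcenter := pow_mem_of_mem_wValuesStar (hE _ _ hcard) hk
  exact congrArg Subtype.val (Subgroup.mem_center_iff.1 hcenter ⟨y, hle hy⟩)

/-- for a `(1/(m+1))`-concise word `w` there is `f : ℕ → ℕ → ℕ` such that
if `G` is a `BFC(w)`-group with `|x^{G_w}| ≤ r` for all `x`, and `B ⊆ G_v^*` is finite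
(`v = [w, x_{n+1}, ..., x_{n+m}]`), then for every `x ∈ G` there is a positive integer
`e ≤ f r |B|` with `b^e ∈ Z(⟨x, B⟩)` for all `b ∈ B`. -/
theorem statement_6 {n : ℕ} (m : ℕ) (w : FreeGroup (Fin n))
    (hw : IsFracConcise w (m + 1)) :
    ∃ f : ℕ → ℕ → ℕ, ∀ (r : ℕ) (G : Type*) [Group G],
      (∀ x : G, (conjSet x (wValues w G)).Finite ∧
        (conjSet x (wValues w G)).ncard ≤ r) →
      ∀ B : Set G, B.Finite → B ⊆ wValuesStar (commWord m w) G →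
      ∀ x : G, ∃ e : ℕ, 0 < e ∧ e ≤ f r B.ncard ∧ ∀ b ∈ B,
        b ^ e ∈ Subgroup.closure (insert x B) ⊓
          Subgroup.centralizer ((Subgroup.closure (insert x B) : Subgroup G) : Set G) :=
  statement_6_general w (commWord m w) fun _ _ hfin _ hb =>
    isOfFinOrder_of_mem_wValues_commWord hw hfin hb
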